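/- arXiv:2309.14607 — 3 statements merged into one kernel-verified Lean document; each statement's English description precedes it below -/
import Mathlib

section
/- Let X be a quasi-Banach space over 𝔽 = ℝ or ℂ and let 𝒳 = (x_n)_{n∈ℕ} be a basis of X. Then 𝒳 is greedy if and only if 𝒳 is unsigned-relaxed greedy for polynomials with constant coefficients (URGPCC), i.e., there exists C > 0 such that ‖f − P_A(f)‖ ≤ C·ϱ_m(f) for every f ∈ X, every m ∈ ℕ, and every greedy set A of f of cardinality m. -/
open scoped BigOperators

noncomputable section

/-- A basis of a quasi-Banach space over `𝕜` (`𝕜 = ℝ` or `ℂ`), bundled with the quasi-norm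
`N`, the basis vectors `e`, and the biorthogonal functionals `coord`. -/
structure QBasis (𝕜 : Type*) [RCLike 𝕜] (X : Type*) [AddCommGroup X] [Module 𝕜 X] :
    Type _ where
  /-- the quasi-norm of the space -/
  N : X → ℝ
  N_nonneg : ∀ f : X, 0 ≤ N f
  N_eq_zero_iff : ∀ f : X, N f = 0 ↔ f = 0
  N_smul : ∀ (t : 𝕜) (f : X), N (t • f) = ‖t‖ * N f
  quasi_triangle : ∃ c : ℝ, 1 ≤ c ∧ ∀ f g : X, N (f + g) ≤ c * (N f + N g)
  /-- completeness with respect to the quasi-norm -/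
  complete : ∀ u : ℕ → X,
      (∀ ε : ℝ, 0 < ε → ∃ n₀ : ℕ, ∀ m n : ℕ, n₀ ≤ m → n₀ ≤ n → N (u m - u n) < ε) →
      ∃ f : X, ∀ ε : ℝ, 0 < ε → ∃ n₀ : ℕ, ∀ n : ℕ, n₀ ≤ n → N (u n - f) < ε
  /-- the basis vectors -/
  e : ℕ → X
  /-- the biorthogonal functionals -/
  coord : ℕ → X →ₗ[𝕜] 𝕜
  biorth : ∀ n m : ℕ, coord n (e m) = if n = m then (1 : 𝕜) else 0
  /-- the closed linear span of the basis vectors is the whole space -/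
  dense_span : ∀ f : X, ∀ ε : ℝ, 0 < ε →
      ∃ g ∈ Submodule.span 𝕜 (Set.range e), N (f - g) < ε
  e_bdd : ∃ c : ℝ, ∀ n : ℕ, N (e n) ≤ c
  coord_bdd : ∃ c : ℝ, ∀ (n : ℕ) (f : X), ‖coord n f‖ ≤ c * N f

namespace QBasis

variable {𝕜 : Type*} [RCLike 𝕜] {X : Type*} [AddCommGroup X] [Module 𝕜 X]

/-- The projection `P_A f = ∑_{n ∈ A} x_n^*(f) x_n`. -/
def proj (bs : QBasis 𝕜 X) (A : Finset ℕ) (f : X) : X :=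
  ∑ n ∈ A, bs.coord n f • bs.e n

/-- `A` is a greedy set of `f`: `min_{n ∈ A} |x_n^*(f)| ≥ max_{m ∉ A} |x_m^*(f)|`. -/
def IsGreedySet (bs : QBasis 𝕜 X) (f : X) (A : Finset ℕ) : Prop :=
  ∀ n ∈ A, ∀ m : ℕ, m ∉ A → ‖bs.coord m f‖ ≤ ‖bs.coord n f‖

/-- `𝟙_{ε,A} = ∑_{j ∈ A} ε_j x_j`. -/
def indSign (bs : QBasis 𝕜 X) (ε : ℕ → 𝕜) (A : Finset ℕ) : X :=
  ∑ j ∈ A, ε j • bs.e j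

/-- `𝟙_A = ∑_{j ∈ A} x_j`. -/
def ind (bs : QBasis 𝕜 X) (A : Finset ℕ) : X := ∑ j ∈ A, bs.e j

/-- `ε` is a sign on `A`. -/
def IsSign (ε : ℕ → 𝕜) (A : Finset ℕ) : Prop := ∀ j ∈ A, ‖ε j‖ = 1

/-- `min_{n ∈ A} |x_n^*(f)|`. -/
def minCoef (bs : QBasis 𝕜 X) (f : X) (A : Finset ℕ) : ℝ :=
  sInf ((fun n => ‖bs.coord n f‖) '' (A : Set ℕ))

/-- `‖f − P_A(f)‖ ≤ C·σ_m(f)` for every greedy set `A` of cardinality `m`. -/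
def IsGreedyWith (bs : QBasis 𝕜 X) (C : ℝ) : Prop :=
  ∀ (f : X) (A B : Finset ℕ) (a : ℕ → 𝕜), bs.IsGreedySet f A → B.card ≤ A.card →
    bs.N (f - bs.proj A f) ≤ C * bs.N (f - ∑ j ∈ B, a j • bs.e j)

/-- `‖f − P_A(f)‖ ≤ C·ρ_m(f)` for every greedy set `A` of cardinality `m`, where
`ρ_m(f) = inf {‖f − α 𝟙_{ε,B}‖ : |B| = m, ε sign}` and `α = min_{n ∈ A} |x_n^*(f)|`. -/
def IsRGPCCWith (bs : QBasis 𝕜 X) (C : ℝ) : Prop :=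
  ∀ (f : X) (A B : Finset ℕ) (ε : ℕ → 𝕜), bs.IsGreedySet f A → B.card = A.card →
    IsSign ε B →
    bs.N (f - bs.proj A f) ≤ C * bs.N (f - ((bs.minCoef f A : ℝ) : 𝕜) • bs.indSign ε B)

/-- `‖f − P_A(f)‖ ≤ C·ϱ_m(f)` for every greedy set `A` of cardinality `m`, where
`ϱ_m(f) = inf {‖f − α 𝟙_B‖ : |B| = m}` and `α = min_{n ∈ A} |x_n^*(f)|`. -/
def IsURGPCCWith (bs : QBasis 𝕜 X) (C : ℝ) : Prop :=
  ∀ (f : X) (A B : Finset ℕ), bs.IsGreedySet f A → B.card = A.card →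
    bs.N (f - bs.proj A f) ≤ C * bs.N (f - ((bs.minCoef f A : ℝ) : 𝕜) • bs.ind B)

end QBasis

/-!
Greediness follows from unconditionality together with democracy, and URGPCC gives both.

*Democracy.* For disjoint `A`, `B` of equal size, `A` is a greedy set of `𝟙_A + 𝟙_B` with threshold
`1`; comparing with `𝟙_B` yields `‖𝟙_B‖ ≤ C ‖𝟙_A‖`.

*Unconditionality.* If the coefficients of `f` on `B` have nonnegative real part, adding `α 𝟙_B`
for a large `α` makes `B` a greedy set, and the relaxed approximant `α 𝟙_B` cancels what was added:
`‖f - P_B f‖ ≤ C ‖f‖`. An extra index with vanishing coefficient keeps the threshold at exactly `α`.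
Splitting a set by the sign of the real part bounds all projections uniformly.

*Bounded multipliers.* Without local convexity, passing from projections to multipliers `|u_n| ≤ 1`
cannot rely on averaging. Instead `u` is rounded to a finite net of the unit disc so fine that the
error has at most half the norm of another multiplier of the same kind, and the supremum over all
multipliers absorbs it.
-/

lemma exists_finset_norm_le_forall_norm_sub_le {E : Type*} [SeminormedAddCommGroup E]
    [ProperSpace E] (r : ℝ) {η : ℝ} (hη : 0 < η) :
    ∃ T : Finset E, (∀ w ∈ T, ‖w‖ ≤ r) ∧ ∀ z : E, ‖z‖ ≤ r → ∃ w ∈ T, ‖z - w‖ ≤ η := by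
  obtain ⟨T, hTsub, hTfin, hTcover⟩ := (isCompact_closedBall (0 : E) r).finite_cover_balls hη
  lift T to Finset E using hTfin
  refine ⟨T, fun w hw => by simpa using hTsub hw, fun z hz => ?_⟩
  have hmem := hTcover (mem_closedBall_zero_iff.2 hz)
  simp only [Set.mem_iUnion, Metric.mem_ball, dist_eq_norm] at hmem
  obtain ⟨w, hw, hzw⟩ := hmem
  exact ⟨w, hw, hzw.le⟩

lemma le_two_mul_of_forall_exists_le_half_add {s : Set ℝ} (hs : BddAbove s) {R : ℝ}
    (h : ∀ r ∈ s, ∃ r' ∈ s, r ≤ r' / 2 + R) {r : ℝ} (hr : r ∈ s) : r ≤ 2 * R := by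
  have hsup : sSup s ≤ sSup s / 2 + R := csSup_le ⟨r, hr⟩ fun q hq => by
    obtain ⟨q', hq', hle⟩ := h q hq
    linarith [le_csSup hs hq']
  linarith [le_csSup hs hr]

namespace QBasis

variable {𝕜 : Type*} [RCLike 𝕜] {X : Type*} [AddCommGroup X] [Module 𝕜 X]

section QuasiNorm

variable (bs : QBasis 𝕜 X)

/-- A constant in the quasi-triangle inequality of the quasi-norm, picked by choice. -/
def quasiConst : ℝ := bs.quasi_triangle.choose

lemma one_le_quasiConst : 1 ≤ bs.quasiConst := bs.quasi_triangle.choose_spec.1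

lemma quasiConst_pos : 0 < bs.quasiConst := one_pos.trans_le bs.one_le_quasiConst

lemma N_add_le (f g : X) : bs.N (f + g) ≤ bs.quasiConst * (bs.N f + bs.N g) :=
  bs.quasi_triangle.choose_spec.2 f g

lemma N_zero : bs.N 0 = 0 := (bs.N_eq_zero_iff 0).2 rfl

lemma N_neg (f : X) : bs.N (-f) = bs.N f := by
  simpa using bs.N_smul (-1) f

lemma N_sub_le (f g : X) : bs.N (f - g) ≤ bs.quasiConst * (bs.N f + bs.N g) := by
  simpa only [sub_eq_add_neg, N_neg] using bs.N_add_le f (-g)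

lemma N_smul_le_of_norm_le_one {t : 𝕜} (ht : ‖t‖ ≤ 1) (f : X) : bs.N (t • f) ≤ bs.N f := by
  rw [N_smul]
  exact mul_le_of_le_one_left (bs.N_nonneg f) ht

lemma N_sum_le {ι : Type*} (s : Finset ι) (f : ι → X) :
    bs.N (∑ i ∈ s, f i) ≤ bs.quasiConst ^ s.card * ∑ i ∈ s, bs.N (f i) := by
  classical
  have hc := bs.quasiConst_pos
  induction s using Finset.induction_on with
  | empty => simp [N_zero]
  | insert a s ha ih =>
    rw [Finset.sum_insert ha, Finset.sum_insert ha, Finset.card_insert_of_notMem ha]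
    have hle : bs.N (f a) ≤ bs.quasiConst ^ s.card * bs.N (f a) :=
      le_mul_of_one_le_left (bs.N_nonneg _) (one_le_pow₀ bs.one_le_quasiConst)
    calc bs.N (f a + ∑ i ∈ s, f i)
        ≤ bs.quasiConst * (bs.N (f a) + bs.N (∑ i ∈ s, f i)) := bs.N_add_le _ _
      _ ≤ bs.quasiConst * (bs.quasiConst ^ s.card * bs.N (f a) +
            bs.quasiConst ^ s.card * ∑ i ∈ s, bs.N (f i)) := by gcongr
      _ = bs.quasiConst ^ (s.card + 1) * (bs.N (f a) + ∑ i ∈ s, bs.N (f i)) := by ring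

end QuasiNorm

section Coordinates

variable (bs : QBasis 𝕜 X)

lemma coord_sum_smul (a : ℕ → 𝕜) (B : Finset ℕ) (n : ℕ) :
    bs.coord n (∑ j ∈ B, a j • bs.e j) = if n ∈ B then a n else 0 := by
  simp [biorth]

lemma coord_ind (B : Finset ℕ) (n : ℕ) : bs.coord n (bs.ind B) = if n ∈ B then 1 else 0 := by
  simp [ind, biorth]

lemma proj_add (A : Finset ℕ) (f g : X) : bs.proj A (f + g) = bs.proj A f + bs.proj A g := by
  simp [proj, add_smul, Finset.sum_add_distrib]

lemma proj_smul (A : Finset ℕ) (t : 𝕜) (f : X) : bs.proj A (t • f) = t • bs.proj A f := by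
  simp [proj, Finset.smul_sum, mul_smul]

lemma proj_neg (A : Finset ℕ) (f : X) : bs.proj A (-f) = -bs.proj A f := by
  simpa using bs.proj_smul A (-1) f

variable {bs} in
lemma proj_congr {A : Finset ℕ} {f g : X} (h : ∀ n ∈ A, bs.coord n f = bs.coord n g) :
    bs.proj A f = bs.proj A g :=
  Finset.sum_congr rfl fun n hn => by rw [h n hn]

lemma proj_union {A B : Finset ℕ} (h : Disjoint A B) (f : X) :
    bs.proj (A ∪ B) f = bs.proj A f + bs.proj B f :=
  Finset.sum_union h

lemma proj_sum_smul_of_subset {A B : Finset ℕ} (h : B ⊆ A) (a : ℕ → 𝕜) :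
    bs.proj A (∑ j ∈ B, a j • bs.e j) = ∑ j ∈ B, a j • bs.e j := by
  simp only [proj, coord_sum_smul, ite_smul, zero_smul, Finset.sum_ite_mem,
    Finset.inter_eq_right.2 h]

lemma proj_smul_ind (A : Finset ℕ) (t : 𝕜) : bs.proj A (t • bs.ind A) = t • bs.ind A := by
  simpa only [ind, Finset.smul_sum] using bs.proj_sum_smul_of_subset subset_rfl fun _ => t

lemma proj_ind_of_disjoint {A B : Finset ℕ} (h : Disjoint A B) : bs.proj A (bs.ind B) = 0 :=
  Finset.sum_eq_zero fun n hn => by simp [coord_ind, Finset.disjoint_left.1 h hn]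

variable {bs} in
lemma minCoef_eq {f : X} {A : Finset ℕ} {d : ℕ} {α : ℝ} (hd : d ∈ A) (hdα : ‖bs.coord d f‖ = α)
    (h : ∀ n ∈ A, α ≤ ‖bs.coord n f‖) : bs.minCoef f A = α := by
  refine IsLeast.csInf_eq ⟨⟨d, hd, hdα⟩, ?_⟩
  rintro _ ⟨n, hn, rfl⟩
  exact h n hn

lemma exists_N_sub_coord_smul_le :
    ∃ M : ℝ, 0 ≤ M ∧ ∀ (n : ℕ) (f : X), bs.N (f - bs.coord n f • bs.e n) ≤ M * bs.N f := by
  obtain ⟨a, ha⟩ := bs.e_bdd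
  obtain ⟨b, hb⟩ := bs.coord_bdd
  have ha₀ : 0 ≤ a := (bs.N_nonneg _).trans (ha 0)
  have hc := bs.quasiConst_pos
  refine ⟨bs.quasiConst * (1 + |b| * a), by positivity, fun n f => ?_⟩
  have hf := bs.N_nonneg f
  have hcoord : ‖bs.coord n f‖ ≤ |b| * bs.N f :=
    (hb n f).trans (mul_le_mul_of_nonneg_right (le_abs_self b) hf)
  calc bs.N (f - bs.coord n f • bs.e n)
      ≤ bs.quasiConst * (bs.N f + ‖bs.coord n f‖ * bs.N (bs.e n)) := by
        simpa only [N_smul] using bs.N_sub_le f (bs.coord n f • bs.e n)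
    _ ≤ bs.quasiConst * (bs.N f + |b| * bs.N f * a) := by
        gcongr
        exacts [bs.N_nonneg _, ha n]
    _ = bs.quasiConst * (1 + |b| * a) * bs.N f := by ring

end Coordinates

/-- Suppression unconditionality: the coordinate projections onto finite sets are uniformly
bounded by `K`. -/
def IsSuppressionUnconditionalWith (bs : QBasis 𝕜 X) (K : ℝ) : Prop :=
  ∀ (B : Finset ℕ) (f : X), bs.N (bs.proj B f) ≤ K * bs.N f

/-- Lattice unconditionality: a finite expansion whose coefficients are dominated by those of `g`
is dominated by `g`. The finite expansion is encoded as a projection `P_B f`. -/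
def IsLatticeUnconditionalWith (bs : QBasis 𝕜 X) (L : ℝ) : Prop :=
  ∀ (B : Finset ℕ) (f g : X), (∀ n ∈ B, ‖bs.coord n f‖ ≤ ‖bs.coord n g‖) →
    bs.N (bs.proj B f) ≤ L * bs.N g

/-- Democracy, restricted to disjoint sets of equal cardinality. -/
def IsDisjointlyDemocraticWith (bs : QBasis 𝕜 X) (D : ℝ) : Prop :=
  ∀ A B : Finset ℕ, Disjoint A B → B.card = A.card → bs.N (bs.ind B) ≤ D * bs.N (bs.ind A)

section Multipliers

/-- The multiplier operator `f ↦ ∑_{n ∈ B} u_n x_n^*(f) x_n` with symbol `u`, cut off to the finite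
set `B`; it interpolates between projections and lattice domination. -/
def multiplier (bs : QBasis 𝕜 X) (u : ℕ → 𝕜) (B : Finset ℕ) (f : X) : X :=
  ∑ n ∈ B, (u n * bs.coord n f) • bs.e n

variable (bs : QBasis 𝕜 X)

lemma multiplier_add (u v : ℕ → 𝕜) (B : Finset ℕ) (f : X) :
    bs.multiplier (u + v) B f = bs.multiplier u B f + bs.multiplier v B f := by
  simp [multiplier, add_mul, add_smul, Finset.sum_add_distrib]

lemma multiplier_smul (t : 𝕜) (u : ℕ → 𝕜) (B : Finset ℕ) (f : X) :
    bs.multiplier (t • u) B f = t • bs.multiplier u B f := by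
  simp [multiplier, Finset.smul_sum, mul_smul]

open Classical in
lemma multiplier_eq_sum_smul_proj {w : ℕ → 𝕜} {B : Finset ℕ} {T : Finset 𝕜}
    (hw : ∀ n ∈ B, w n ∈ T) (f : X) :
    bs.multiplier w B f = ∑ z ∈ T, z • bs.proj (B.filter (w · = z)) f := by
  rw [multiplier, ← Finset.sum_fiberwise_of_maps_to hw]
  refine Finset.sum_congr rfl fun z _ => ?_
  rw [proj, Finset.smul_sum]
  exact Finset.sum_congr rfl fun n hn => by rw [mul_smul, (Finset.mem_filter.1 hn).2]

variable {bs} in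
lemma multiplier_div_eq_proj {B : Finset ℕ} {f g : X}
    (h : ∀ n ∈ B, ‖bs.coord n f‖ ≤ ‖bs.coord n g‖) :
    bs.multiplier (fun n => bs.coord n f / bs.coord n g) B g = bs.proj B f := by
  refine Finset.sum_congr rfl fun n hn => ?_
  have hzero : bs.coord n g = 0 → bs.coord n f = 0 := fun hg =>
    norm_le_zero_iff.1 ((h n hn).trans_eq (by rw [hg, norm_zero]))
  rw [div_mul_cancel_of_imp hzero]

lemma bddAbove_N_multiplier (B : Finset ℕ) (f : X) :
    BddAbove ((fun u : ℕ → 𝕜 => bs.N (bs.multiplier u B f)) '' {u | ∀ n ∈ B, ‖u n‖ ≤ 1}) := by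
  have hc := bs.quasiConst_pos
  refine ⟨bs.quasiConst ^ B.card * ∑ n ∈ B, bs.N (bs.coord n f • bs.e n), ?_⟩
  rintro _ ⟨u, hu, rfl⟩
  refine (bs.N_sum_le B _).trans ?_
  gcongr with n hn
  rw [mul_smul]
  exact bs.N_smul_le_of_norm_le_one (hu n hn) _

variable {bs} {K : ℝ}

lemma IsSuppressionUnconditionalWith.N_multiplier_le_of_mem
    (h : bs.IsSuppressionUnconditionalWith K) {T : Finset 𝕜} (hT : ∀ z ∈ T, ‖z‖ ≤ 1)
    {w : ℕ → 𝕜} {B : Finset ℕ} (hw : ∀ n ∈ B, w n ∈ T) (f : X) :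
    bs.N (bs.multiplier w B f) ≤ bs.quasiConst ^ T.card * (T.card * K) * bs.N f := by
  classical
  have hc := bs.quasiConst_pos
  rw [bs.multiplier_eq_sum_smul_proj hw, mul_assoc, mul_assoc, ← nsmul_eq_mul]
  refine (bs.N_sum_le T _).trans ?_
  gcongr
  exact Finset.sum_le_card_nsmul _ _ _ fun z hz =>
    (bs.N_smul_le_of_norm_le_one (hT z hz) _).trans (h _ f)

lemma IsSuppressionUnconditionalWith.exists_N_multiplier_le_half_add
    (h : bs.IsSuppressionUnconditionalWith K) (hK : 0 ≤ K) :
    ∃ R : ℝ, 0 ≤ R ∧ ∀ (B : Finset ℕ) (f : X) (u : ℕ → 𝕜), (∀ n ∈ B, ‖u n‖ ≤ 1) →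
      ∃ v : ℕ → 𝕜, (∀ n ∈ B, ‖v n‖ ≤ 1) ∧
        bs.N (bs.multiplier u B f) ≤ bs.N (bs.multiplier v B f) / 2 + R * bs.N f := by
  have hc := bs.quasiConst_pos
  set η : ℝ := (2 * bs.quasiConst)⁻¹ with hη
  have hη₀ : 0 < η := by positivity
  have hη𝕜 : (η : 𝕜) ≠ 0 := by exact_mod_cast hη₀.ne'
  have hnorm : ‖(η : 𝕜)‖ = η := RCLike.norm_of_nonneg hη₀.le
  obtain ⟨T, hT, hnet⟩ := exists_finset_norm_le_forall_norm_sub_le (E := 𝕜) 1 hη₀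
  choose! round hround hround_sub using hnet
  set M : ℝ := bs.quasiConst ^ T.card * (T.card * K)
  refine ⟨bs.quasiConst * M, by positivity, fun B f u hu => ?_⟩
  set w : ℕ → 𝕜 := fun n => round (u n)
  set v : ℕ → 𝕜 := (η : 𝕜)⁻¹ • (u - w) with hv
  have hsplit : u = (η : 𝕜) • v + w := by rw [hv, smul_inv_smul₀ hη𝕜, sub_add_cancel]
  refine ⟨v, fun n hn => ?_, ?_⟩
  · calc ‖v n‖ = η⁻¹ * ‖u n - w n‖ := by simp [hv, hnorm]
      _ ≤ 1 := inv_mul_le_one_of_le₀ (hround_sub _ (hu n hn)) hη₀.le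
  · calc bs.N (bs.multiplier u B f)
        = bs.N ((η : 𝕜) • bs.multiplier v B f + bs.multiplier w B f) := by
          rw [← multiplier_smul, ← multiplier_add, ← hsplit]
      _ ≤ bs.quasiConst * (η * bs.N (bs.multiplier v B f) + M * bs.N f) := by
          refine (bs.N_add_le _ _).trans ?_
          rw [N_smul, hnorm]
          gcongr
          exact h.N_multiplier_le_of_mem hT (fun n hn => hround _ (hu n hn)) f
      _ = bs.N (bs.multiplier v B f) / 2 + bs.quasiConst * M * bs.N f := by
          rw [hη]
          field_simp

theorem IsSuppressionUnconditionalWith.exists_isLatticeUnconditionalWith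
    (h : bs.IsSuppressionUnconditionalWith K) (hK : 0 ≤ K) :
    ∃ L : ℝ, 0 ≤ L ∧ bs.IsLatticeUnconditionalWith L := by
  obtain ⟨R, hR, hhalf⟩ := h.exists_N_multiplier_le_half_add hK
  refine ⟨2 * R, by positivity, fun B f g hfg => ?_⟩
  rw [← multiplier_div_eq_proj hfg, mul_assoc]
  refine le_two_mul_of_forall_exists_le_half_add (bs.bddAbove_N_multiplier B g) ?_
    ⟨_, fun n hn => ?_, rfl⟩
  · rintro _ ⟨u, hu, rfl⟩
    obtain ⟨v, hv, hle⟩ := hhalf B g u hu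
    exact ⟨_, ⟨v, hv, rfl⟩, hle⟩
  · rw [norm_div]
    exact div_le_one_of_le₀ (hfg n hn) (norm_nonneg _)

end Multipliers

section Greedy

variable {bs : QBasis 𝕜 X} {L D : ℝ}

lemma IsLatticeUnconditionalWith.N_sub_proj_le (h : bs.IsLatticeUnconditionalWith L)
    (B : Finset ℕ) (f : X) : bs.N (f - bs.proj B f) ≤ bs.quasiConst * (1 + L) * bs.N f := by
  have hc := bs.quasiConst_pos
  calc bs.N (f - bs.proj B f) ≤ bs.quasiConst * (bs.N f + bs.N (bs.proj B f)) := bs.N_sub_le _ _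
    _ ≤ bs.quasiConst * (bs.N f + L * bs.N f) := by
        gcongr
        exact h B f f fun _ _ => le_rfl
    _ = bs.quasiConst * (1 + L) * bs.N f := by ring

lemma IsLatticeUnconditionalWith.N_proj_le_of_disjoint (h : bs.IsLatticeUnconditionalWith L)
    (hL : 0 ≤ L) (hdem : bs.IsDisjointlyDemocraticWith D) (hD : 0 ≤ D) {A B : Finset ℕ}
    (hAB : Disjoint A B) (hcard : B.card = A.card) {f g : X}
    (hfg : ∀ n ∈ A, ∀ m ∈ B, ‖bs.coord m f‖ ≤ ‖bs.coord n g‖) :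
    bs.N (bs.proj B f) ≤ L * (D * L) * bs.N g := by
  set α : NNReal := B.sup fun m => ‖bs.coord m f‖₊
  set t : 𝕜 := ((α : ℝ) : 𝕜)
  have ht : ‖t‖ = α := RCLike.norm_of_nonneg α.2
  have hB : bs.N (bs.proj B f) ≤ L * bs.N (t • bs.ind B) := h _ _ _ fun m hm => by
    have hle : ‖bs.coord m f‖ ≤ α :=
      NNReal.coe_le_coe.2 (Finset.le_sup (f := fun m => ‖bs.coord m f‖₊) hm)
    simpa [coord_ind, hm, ht] using hle
  have hA : bs.N (t • bs.ind A) ≤ L * bs.N g := by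
    rw [← proj_smul_ind]
    refine h _ _ _ fun n hn => ?_
    have hle : α ≤ ‖bs.coord n g‖ :=
      NNReal.coe_le_coe.2 (Finset.sup_le (hfg n hn) : α ≤ ‖bs.coord n g‖₊)
    simpa [coord_ind, hn, ht] using hle
  calc bs.N (bs.proj B f) ≤ L * bs.N (t • bs.ind B) := hB
    _ = L * (‖t‖ * bs.N (bs.ind B)) := by rw [N_smul]
    _ ≤ L * (‖t‖ * (D * bs.N (bs.ind A))) := by
        gcongr
        exact hdem A B hAB hcard
    _ = L * (D * bs.N (t • bs.ind A)) := by rw [N_smul]; ring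
    _ ≤ L * (D * (L * bs.N g)) := by gcongr
    _ = L * (D * L) * bs.N g := by ring

lemma IsLatticeUnconditionalWith.N_proj_sdiff_le (h : bs.IsLatticeUnconditionalWith L)
    (hL : 0 ≤ L) (hdem : bs.IsDisjointlyDemocraticWith D) (hD : 0 ≤ D) {f g : X}
    {A B : Finset ℕ} (hA : bs.IsGreedySet f A) (hBA : B.card ≤ A.card)
    (hfg : ∀ n ∉ B, bs.coord n g = bs.coord n f) :
    bs.N (bs.proj (B \ A) f) ≤ L * (D * L) * bs.N g := by
  obtain ⟨A', hA', hcard⟩ :=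
    Finset.exists_subset_card_eq (Finset.card_sdiff_le_card_sdiff_iff.2 hBA)
  have hdisj : Disjoint A' (B \ A) :=
    Finset.disjoint_of_subset_left (hA'.trans Finset.sdiff_subset) Finset.disjoint_sdiff
  refine h.N_proj_le_of_disjoint hL hdem hD hdisj hcard.symm fun n hn m hm => ?_
  obtain ⟨hnA, hnB⟩ := Finset.mem_sdiff.1 (hA' hn)
  rw [hfg n hnB]
  exact hA n hnA m (Finset.mem_sdiff.1 hm).2

theorem IsLatticeUnconditionalWith.isGreedyWith (h : bs.IsLatticeUnconditionalWith L)
    (hL : 0 ≤ L) (hdem : bs.IsDisjointlyDemocraticWith D) (hD : 0 ≤ D) :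
    bs.IsGreedyWith (bs.quasiConst * (bs.quasiConst * (1 + L) + L * (D * L))) := by
  intro f A B a hA hBA
  set p := ∑ j ∈ B, a j • bs.e j with hp
  have hc := bs.quasiConst_pos
  have hout : f - bs.proj (A ∪ B) f = (f - p) - bs.proj (A ∪ B) (f - p) := by
    have hproj := bs.proj_add (A ∪ B) (f - p) p
    rw [sub_add_cancel, hp, bs.proj_sum_smul_of_subset Finset.subset_union_right] at hproj
    rw [hproj]
    abel
  have hcoord : ∀ n ∉ B, bs.coord n (f - p) = bs.coord n f := fun n hn => by
    rw [map_sub, hp, coord_sum_smul, if_neg hn, sub_zero]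
  have hsplit : f - bs.proj A f = (f - bs.proj (A ∪ B) f) + bs.proj (B \ A) f := by
    rw [← Finset.union_sdiff_self_eq_union, bs.proj_union Finset.disjoint_sdiff]
    abel
  calc bs.N (f - bs.proj A f)
      ≤ bs.quasiConst * (bs.N (f - bs.proj (A ∪ B) f) + bs.N (bs.proj (B \ A) f)) := by
        rw [hsplit]
        exact bs.N_add_le _ _
    _ ≤ bs.quasiConst *
          (bs.quasiConst * (1 + L) * bs.N (f - p) + L * (D * L) * bs.N (f - p)) := by
        gcongr
        · rw [hout]
          exact h.N_sub_proj_le _ _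
        · exact h.N_proj_sdiff_le hL hdem hD hA hBA hcoord
    _ = bs.quasiConst * (bs.quasiConst * (1 + L) + L * (D * L)) * bs.N (f - p) := by ring

end Greedy

section URGPCC

variable {bs : QBasis 𝕜 X} {C : ℝ}

lemma IsGreedyWith.isURGPCCWith (h : bs.IsGreedyWith C) : bs.IsURGPCCWith C := by
  intro f A B hA hBA
  simpa only [ind, Finset.smul_sum] using h f A B (fun _ => bs.minCoef f A) hA hBA.le

theorem IsURGPCCWith.isDisjointlyDemocraticWith (h : bs.IsURGPCCWith C) :
    bs.IsDisjointlyDemocraticWith C := by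
  intro A B hAB hcard
  rcases A.eq_empty_or_nonempty with rfl | ⟨d, hd⟩
  · simp [Finset.card_eq_zero.1 hcard, ind, N_zero]
  set F := bs.ind A + bs.ind B with hF
  have hFA : ∀ n ∈ A, ‖bs.coord n F‖ = 1 := fun n hn => by
    simp [hF, coord_ind, hn, Finset.disjoint_left.1 hAB hn]
  have hFout : ∀ n ∉ A, ‖bs.coord n F‖ ≤ 1 := fun n hn => by
    by_cases hnB : n ∈ B <;> simp [hF, coord_ind, hn, hnB]
  have hmin : bs.minCoef F A = 1 := minCoef_eq hd (hFA d hd) fun n hn => (hFA n hn).ge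
  have hproj : bs.proj A F = bs.ind A := by
    simpa [hF, proj_add, bs.proj_ind_of_disjoint hAB] using bs.proj_smul_ind A 1
  have hmain := h F A B (fun n hn m hm => (hFout m hm).trans (hFA n hn).ge) hcard
  rw [hmin, hproj, hF] at hmain
  simpa using hmain

lemma IsURGPCCWith.N_sub_proj_le_of_coord_eq_zero (h : bs.IsURGPCCWith C) {g : X} {B : Finset ℕ}
    {d : ℕ} (hd : d ∉ B) (hgd : bs.coord d g = 0) (hB : ∀ n ∈ B, 0 ≤ RCLike.re (bs.coord n g)) :
    bs.N (g - bs.proj B g) ≤ C * bs.N g := by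
  obtain ⟨b, hb⟩ := bs.coord_bdd
  obtain ⟨α, hα⟩ : ∃ α : ℝ, ∀ n, ‖bs.coord n g‖ ≤ α := ⟨_, fun n => hb n g⟩
  have hα₀ : 0 ≤ α := (norm_nonneg _).trans (hα 0)
  set E := insert d B with hE
  set F := g + (α : 𝕜) • bs.ind E with hF
  have hFd : ‖bs.coord d F‖ = α := by simp [hF, coord_ind, hE, hgd, abs_of_nonneg hα₀]
  have hFE : ∀ n ∈ E, α ≤ ‖bs.coord n F‖ := by
    intro n hn
    rcases Finset.mem_insert.1 hn with rfl | hnB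
    · exact hFd.ge
    · calc α ≤ RCLike.re (bs.coord n F) := by simp [hF, coord_ind, hn, hB n hnB]
        _ ≤ ‖bs.coord n F‖ := RCLike.re_le_norm _
  have hFout : ∀ n ∉ E, ‖bs.coord n F‖ ≤ α := fun n hn => by
    simpa [hF, coord_ind, hn] using hα n
  have hmin : bs.minCoef F E = α := minCoef_eq (Finset.mem_insert_self d B) hFd hFE
  have hproj : bs.proj E F = bs.proj B g + (α : 𝕜) • bs.ind E := by
    rw [hF, proj_add, proj_smul_ind, hE, proj, Finset.sum_insert hd, hgd, zero_smul, zero_add, proj]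
  have hmain := h F E E (fun n hn m hm => (hFout m hm).trans (hFE n hn)) rfl
  rw [hmin, hproj, hF] at hmain
  simpa using hmain

lemma IsURGPCCWith.exists_N_proj_le_of_re_nonneg (h : bs.IsURGPCCWith C) (hC : 0 ≤ C) :
    ∃ K : ℝ, 0 ≤ K ∧ ∀ (B : Finset ℕ) (f : X), (∀ n ∈ B, 0 ≤ RCLike.re (bs.coord n f)) →
      bs.N (bs.proj B f) ≤ K * bs.N f := by
  obtain ⟨M, hM, hdrop⟩ := bs.exists_N_sub_coord_smul_le
  have hc := bs.quasiConst_pos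
  refine ⟨bs.quasiConst * (1 + C) * M, by positivity, fun B f hB => ?_⟩
  obtain ⟨d, hd⟩ := Infinite.exists_notMem_finset B
  set g := f - bs.coord d f • bs.e d with hg
  have hgd : bs.coord d g = 0 := by simp [hg, biorth]
  have hgB : ∀ n ∈ B, bs.coord n g = bs.coord n f := fun n hn => by
    simp [hg, biorth, ne_of_mem_of_not_mem hn hd]
  have hsup := h.N_sub_proj_le_of_coord_eq_zero hd hgd fun n hn => by simpa [hgB n hn] using hB n hn
  calc bs.N (bs.proj B f) = bs.N (g - (g - bs.proj B g)) := by
        rw [sub_sub_cancel, proj_congr hgB]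
    _ ≤ bs.quasiConst * (bs.N g + bs.N (g - bs.proj B g)) := bs.N_sub_le _ _
    _ ≤ bs.quasiConst * (bs.N g + C * bs.N g) := by gcongr
    _ = bs.quasiConst * (1 + C) * bs.N g := by ring
    _ ≤ bs.quasiConst * (1 + C) * (M * bs.N f) := by
        gcongr
        exact hdrop d f
    _ = bs.quasiConst * (1 + C) * M * bs.N f := by ring

theorem IsURGPCCWith.exists_isSuppressionUnconditionalWith (h : bs.IsURGPCCWith C) (hC : 0 ≤ C) :
    ∃ K : ℝ, 0 ≤ K ∧ bs.IsSuppressionUnconditionalWith K := by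
  classical
  obtain ⟨K, hK, hpos⟩ := h.exists_N_proj_le_of_re_nonneg hC
  have hc := bs.quasiConst_pos
  refine ⟨bs.quasiConst * (K + K), by positivity, fun B f => ?_⟩
  set P := B.filter fun n => 0 ≤ RCLike.re (bs.coord n f)
  set Q := B.filter fun n => ¬0 ≤ RCLike.re (bs.coord n f)
  have hP : bs.N (bs.proj P f) ≤ K * bs.N f := hpos P f fun n hn => (Finset.mem_filter.1 hn).2
  have hQ : bs.N (bs.proj Q f) ≤ K * bs.N f := by
    have hneg : ∀ n ∈ Q, 0 ≤ RCLike.re (bs.coord n (-f)) := fun n hn => by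
      simpa using (not_le.1 (Finset.mem_filter.1 hn).2).le
    simpa only [proj_neg, N_neg] using hpos Q (-f) hneg
  have hPQ : bs.proj B f = bs.proj P f + bs.proj Q f := by
    rw [← bs.proj_union (Finset.disjoint_filter_filter_not _ _ _),
      Finset.filter_union_filter_not_eq]
  calc bs.N (bs.proj B f) ≤ bs.quasiConst * (bs.N (bs.proj P f) + bs.N (bs.proj Q f)) := by
        rw [hPQ]
        exact bs.N_add_le _ _
    _ ≤ bs.quasiConst * (K * bs.N f + K * bs.N f) := by gcongr
    _ = bs.quasiConst * (K + K) * bs.N f := by ring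

end URGPCC

end QBasis

/-- A basis of a quasi-Banach space over `ℝ` or `ℂ` is greedy if and only if
it is unsigned-relaxed greedy for polynomials with constant coefficients (URGPCC). -/
theorem greedy_iff_URGPCC {𝕜 : Type*} [RCLike 𝕜] {X : Type*} [AddCommGroup X] [Module 𝕜 X]
    (bs : QBasis 𝕜 X) :
    (∃ C : ℝ, 0 < C ∧ bs.IsGreedyWith C) ↔ (∃ C : ℝ, 0 < C ∧ bs.IsURGPCCWith C) := by
  refine ⟨fun ⟨C, hC, h⟩ => ⟨C, hC, h.isURGPCCWith⟩, fun ⟨C, hC, h⟩ => ?_⟩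
  obtain ⟨K, hK, hsupp⟩ := h.exists_isSuppressionUnconditionalWith hC.le
  obtain ⟨L, hL, hlat⟩ := hsupp.exists_isLatticeUnconditionalWith hK
  have hc := bs.quasiConst_pos
  exact ⟨_, by positivity, hlat.isGreedyWith hL h.isDisjointlyDemocraticWith hC.le⟩
end
end

section
/- Let 0 < p ≤ 1, let X be a p-Banach space over 𝔽 = ℝ or ℂ, let 𝒳 be a basis of X, and let f ∈ X with supp(f) = ∅ (i.e., x_n^*(f) = 0 for all n). Then for every finite D ⊂ ℕ and every ε > 0 there exists g ∈ span{𝒳} such that ‖f − g‖ < ε, sup_j |x_j^*(g)| < ε, and P_D(g) = P_D(f) = 0. -/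
open scoped BigOperators

noncomputable section

/-- A basis of a `p`-Banach space over `𝕜` (`𝕜 = ℝ` or `ℂ`), bundled with the `p`-norm
`N`, the basis vectors `e`, and the biorthogonal functionals `coord`. -/
structure PBasis (𝕜 : Type*) [RCLike 𝕜] (X : Type*) [AddCommGroup X] [Module 𝕜 X]
    (p : ℝ) : Type _ where
  /-- the `p`-norm of the space -/
  N : X → ℝ
  N_nonneg : ∀ f : X, 0 ≤ N f
  N_eq_zero_iff : ∀ f : X, N f = 0 ↔ f = 0
  N_smul : ∀ (t : 𝕜) (f : X), N (t • f) = ‖t‖ * N f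
  N_padd : ∀ f g : X, N (f + g) ^ p ≤ N f ^ p + N g ^ p
  /-- completeness with respect to the `p`-norm -/
  complete : ∀ u : ℕ → X,
      (∀ ε : ℝ, 0 < ε → ∃ n₀ : ℕ, ∀ m n : ℕ, n₀ ≤ m → n₀ ≤ n → N (u m - u n) < ε) →
      ∃ f : X, ∀ ε : ℝ, 0 < ε → ∃ n₀ : ℕ, ∀ n : ℕ, n₀ ≤ n → N (u n - f) < ε
  /-- the basis vectors -/
  e : ℕ → X
  /-- the biorthogonal functionals -/
  coord : ℕ → X →ₗ[𝕜] 𝕜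
  biorth : ∀ n m : ℕ, coord n (e m) = if n = m then (1 : 𝕜) else 0
  /-- the closed linear span of the basis vectors is the whole space -/
  dense_span : ∀ f : X, ∀ ε : ℝ, 0 < ε →
      ∃ g ∈ Submodule.span 𝕜 (Set.range e), N (f - g) < ε
  e_bdd : ∃ c : ℝ, ∀ n : ℕ, N (e n) ≤ c
  coord_bdd : ∃ c : ℝ, ∀ (n : ℕ) (f : X), ‖coord n f‖ ≤ c * N f

namespace PBasis

variable {𝕜 : Type*} [RCLike 𝕜] {X : Type*} [AddCommGroup X] [Module 𝕜 X] {p : ℝ}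

/-- The projection `P_A f = ∑_{n ∈ A} x_n^*(f) x_n`. -/
def proj (bs : PBasis 𝕜 X p) (A : Finset ℕ) (f : X) : X :=
  ∑ n ∈ A, bs.coord n f • bs.e n

/-- The support of `f`. -/
def supp (bs : PBasis 𝕜 X p) (f : X) : Set ℕ := {n | bs.coord n f ≠ 0}

/-- `A` is a greedy set of `f`: `min_{n ∈ A} |x_n^*(f)| ≥ max_{m ∉ A} |x_m^*(f)|`. -/
def IsGreedySet (bs : PBasis 𝕜 X p) (f : X) (A : Finset ℕ) : Prop :=
  ∀ n ∈ A, ∀ m : ℕ, m ∉ A → ‖bs.coord m f‖ ≤ ‖bs.coord n f‖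

/-- `𝟙_{ε,A} = ∑_{j ∈ A} ε_j x_j`. -/
def indSign (bs : PBasis 𝕜 X p) (ε : ℕ → 𝕜) (A : Finset ℕ) : X :=
  ∑ j ∈ A, ε j • bs.e j

/-- `𝟙_A = ∑_{j ∈ A} x_j`. -/
def ind (bs : PBasis 𝕜 X p) (A : Finset ℕ) : X := ∑ j ∈ A, bs.e j

/-- `ε` is a sign on `A`. -/
def IsSign (ε : ℕ → 𝕜) (A : Finset ℕ) : Prop := ∀ j ∈ A, ‖ε j‖ = 1

/-- `min_{n ∈ A} |x_n^*(f)|`. -/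
def minCoef (bs : PBasis 𝕜 X p) (f : X) (A : Finset ℕ) : ℝ :=
  sInf ((fun n => ‖bs.coord n f‖) '' (A : Set ℕ))

/-- `‖f − P_A(f)‖ ≤ C·σ_m(f)` for every greedy set `A` of cardinality `m`. -/
def IsGreedyWith (bs : PBasis 𝕜 X p) (C : ℝ) : Prop :=
  ∀ (f : X) (A B : Finset ℕ) (a : ℕ → 𝕜), bs.IsGreedySet f A → B.card ≤ A.card →
    bs.N (f - bs.proj A f) ≤ C * bs.N (f - ∑ j ∈ B, a j • bs.e j)

/-- `‖f − P_A(f)‖ ≤ C·ρ_m(f)` for every greedy set `A` of cardinality `m`, where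
`ρ_m(f) = inf {‖f − α 𝟙_{ε,B}‖ : |B| = m, ε sign}` and `α = min_{n ∈ A} |x_n^*(f)|`. -/
def IsRGPCCWith (bs : PBasis 𝕜 X p) (C : ℝ) : Prop :=
  ∀ (f : X) (A B : Finset ℕ) (ε : ℕ → 𝕜), bs.IsGreedySet f A → B.card = A.card →
    IsSign ε B →
    bs.N (f - bs.proj A f) ≤ C * bs.N (f - ((bs.minCoef f A : ℝ) : 𝕜) • bs.indSign ε B)

/-- `‖f − P_A(f)‖ ≤ C·ϱ_m(f)` for every greedy set `A` of cardinality `m`, where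
`ϱ_m(f) = inf {‖f − α 𝟙_B‖ : |B| = m}` and `α = min_{n ∈ A} |x_n^*(f)|`. -/
def IsURGPCCWith (bs : PBasis 𝕜 X p) (C : ℝ) : Prop :=
  ∀ (f : X) (A B : Finset ℕ), bs.IsGreedySet f A → B.card = A.card →
    bs.N (f - bs.proj A f) ≤ C * bs.N (f - ((bs.minCoef f A : ℝ) : 𝕜) • bs.ind B)

/-- `K`-unconditionality. -/
def IsUncondWith (bs : PBasis 𝕜 X p) (K : ℝ) : Prop :=
  ∀ (A : Finset ℕ) (f : X), bs.N (bs.proj A f) ≤ K * bs.N f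

/-- `C`-quasi-greediness. -/
def IsQuasiGreedyWith (bs : PBasis 𝕜 X p) (C : ℝ) : Prop :=
  ∀ (f : X) (A : Finset ℕ), bs.IsGreedySet f A → bs.N (f - bs.proj A f) ≤ C * bs.N f

/-- `C`-almost-greediness. -/
def IsAlmostGreedyWith (bs : PBasis 𝕜 X p) (C : ℝ) : Prop :=
  ∀ (f : X) (A B : Finset ℕ), bs.IsGreedySet f A → B.card ≤ A.card →
    bs.N (f - bs.proj A f) ≤ C * bs.N (f - bs.proj B f)

/-- `D`-democracy. -/
def IsDemocraticWith (bs : PBasis 𝕜 X p) (D : ℝ) : Prop :=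
  ∀ A B : Finset ℕ, A.card ≤ B.card → bs.N (bs.ind A) ≤ D * bs.N (bs.ind B)

/-- `D`-superdemocracy. -/
def IsSuperdemocraticWith (bs : PBasis 𝕜 X p) (D : ℝ) : Prop :=
  ∀ (A B : Finset ℕ) (ε η : ℕ → 𝕜), A.card ≤ B.card → IsSign ε A → IsSign η B →
    bs.N (bs.indSign ε A) ≤ D * bs.N (bs.indSign η B)

/-- `A < B`, i.e. every element of `A` is smaller than every element of `B`. -/
def FinsetBefore (A B : Finset ℕ) : Prop := ∀ a ∈ A, ∀ b ∈ B, a < b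

open scoped Classical in
/-- `sgn z = z/|z|` (with the convention `sgn 0 = 1`). -/
def sgn (z : 𝕜) : 𝕜 := if z = 0 then 1 else z / ((‖z‖ : ℝ) : 𝕜)

end PBasis

/-! The projection `P_D` has finite rank and bounded coordinates, so `u ↦ u - P_D u` is bounded in
the `p`-norm. If `h` in the span is close to `f`, then so is `g = h + P_D (f - h)`, because
`f - g = (f - h) - P_D (f - h)`; and `g` has the same coordinates as `f` on `D`. Uniform boundedness
of the coordinate functionals makes all coordinates of `f - g` small at once. -/

namespace PBasis

variable {𝕜 : Type*} [RCLike 𝕜] {X : Type*} [AddCommGroup X] [Module 𝕜 X] {p : ℝ}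

lemma coord_proj_of_mem (bs : PBasis 𝕜 X p) {A : Finset ℕ} {n : ℕ} (hn : n ∈ A) (f : X) :
    bs.coord n (bs.proj A f) = bs.coord n f := by
  simp [proj, bs.biorth, hn]

lemma proj_congr (bs : PBasis 𝕜 X p) {A : Finset ℕ} {f g : X}
    (h : ∀ n ∈ A, bs.coord n f = bs.coord n g) : bs.proj A f = bs.proj A g :=
  Finset.sum_congr rfl fun n hn => by rw [h n hn]

lemma proj_mem_span (bs : PBasis 𝕜 X p) (A : Finset ℕ) (f : X) :
    bs.proj A f ∈ Submodule.span 𝕜 (Set.range bs.e) :=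
  Submodule.sum_mem _ fun n _ =>
    Submodule.smul_mem _ _ (Submodule.subset_span (Set.mem_range_self n))

lemma N_neg (bs : PBasis 𝕜 X p) (f : X) : bs.N (-f) = bs.N f := by
  simpa using bs.N_smul (-1) f

lemma N_sub_le_mul (hp : 0 < p) (bs : PBasis 𝕜 X p) {f g : X} {a b t : ℝ} (ha : 0 ≤ a)
    (hb : 0 ≤ b) (ht : 0 ≤ t) (hf : bs.N f ≤ a * t) (hg : bs.N g ≤ b * t) :
    bs.N (f - g) ≤ (a ^ p + b ^ p) ^ p⁻¹ * t := by
  refine (Real.rpow_le_rpow_iff (bs.N_nonneg _) (by positivity) hp).1 ?_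
  calc bs.N (f - g) ^ p ≤ bs.N f ^ p + bs.N g ^ p := by
        simpa only [sub_eq_add_neg, bs.N_neg] using bs.N_padd f (-g)
    _ ≤ (a * t) ^ p + (b * t) ^ p :=
        add_le_add (Real.rpow_le_rpow (bs.N_nonneg _) hf hp.le)
          (Real.rpow_le_rpow (bs.N_nonneg _) hg hp.le)
    _ = ((a ^ p + b ^ p) ^ p⁻¹ * t) ^ p := by
        rw [Real.mul_rpow ha ht, Real.mul_rpow hb ht, Real.mul_rpow (by positivity) ht,
          Real.rpow_inv_rpow (by positivity) hp.ne', add_mul]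

lemma exists_norm_coord_le (bs : PBasis 𝕜 X p) :
    ∃ c : ℝ, 0 ≤ c ∧ ∀ (n : ℕ) (f : X), ‖bs.coord n f‖ ≤ c * bs.N f := by
  obtain ⟨c, hc⟩ := bs.coord_bdd
  exact ⟨max c 0, le_max_right _ _, fun n f =>
    (hc n f).trans (mul_le_mul_of_nonneg_right (le_max_left _ _) (bs.N_nonneg f))⟩

lemma exists_N_sub_proj_le (hp : 0 < p) (bs : PBasis 𝕜 X p) (A : Finset ℕ) :
    ∃ K : ℝ, 0 ≤ K ∧ ∀ f : X, bs.N (f - bs.proj A f) ≤ K * bs.N f := by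
  obtain ⟨c, hc, hcoord⟩ := bs.exists_norm_coord_le
  induction A using Finset.induction_on with
  | empty => exact ⟨1, zero_le_one, fun f => by simp [proj]⟩
  | insert n A hn ih =>
    obtain ⟨K, hK, hproj⟩ := ih
    have hterm (f : X) : bs.N (bs.coord n f • bs.e n) ≤ c * bs.N (bs.e n) * bs.N f := by
      rw [bs.N_smul, mul_right_comm]
      exact mul_le_mul_of_nonneg_right (hcoord n f) (bs.N_nonneg _)
    have hce : 0 ≤ c * bs.N (bs.e n) := mul_nonneg hc (bs.N_nonneg _)
    refine ⟨(K ^ p + (c * bs.N (bs.e n)) ^ p) ^ p⁻¹, by positivity, fun f => ?_⟩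
    have hsplit : f - bs.proj (insert n A) f = (f - bs.proj A f) - bs.coord n f • bs.e n := by
      rw [proj, Finset.sum_insert hn, sub_add_eq_sub_sub_swap, proj]
    rw [hsplit]
    exact bs.N_sub_le_mul hp hK hce (bs.N_nonneg f) (hproj f) (hterm f)

lemma exists_mem_span_N_sub_lt_and_coord_eq (hp : 0 < p) (bs : PBasis 𝕜 X p) (f : X)
    (D : Finset ℕ) {ε : ℝ} (hε : 0 < ε) :
    ∃ g ∈ Submodule.span 𝕜 (Set.range bs.e),
      bs.N (f - g) < ε ∧ ∀ n ∈ D, bs.coord n g = bs.coord n f := by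
  obtain ⟨K, hK, hproj⟩ := bs.exists_N_sub_proj_le hp D
  obtain ⟨δ, hδ, hKδ⟩ := exists_pos_mul_lt hε K
  obtain ⟨h, hh, hfh⟩ := bs.dense_span f δ hδ
  refine ⟨h + bs.proj D (f - h), add_mem hh (bs.proj_mem_span D _), ?_, fun n hn => ?_⟩
  · calc bs.N (f - (h + bs.proj D (f - h)))
        = bs.N ((f - h) - bs.proj D (f - h)) := by rw [sub_add_eq_sub_sub]
      _ ≤ K * bs.N (f - h) := hproj _
      _ ≤ K * δ := mul_le_mul_of_nonneg_left hfh.le hK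
      _ < ε := hKδ
  · rw [map_add, bs.coord_proj_of_mem hn, map_sub, add_sub_cancel]

end PBasis

theorem approximation_in_span_empty_supp_general {𝕜 : Type*} [RCLike 𝕜] {X : Type*}
    [AddCommGroup X] [Module 𝕜 X] {p : ℝ} (hp : 0 < p) (bs : PBasis 𝕜 X p) (f : X)
    (D : Finset ℕ) {ε : ℝ} (hε : 0 < ε) :
    ∃ g ∈ Submodule.span 𝕜 (Set.range bs.e), bs.N (f - g) < ε ∧
      (⨆ j : ℕ, ‖bs.coord j (f - g)‖) < ε ∧ bs.proj D g = bs.proj D f := by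
  obtain ⟨c, hc, hcoord⟩ := bs.exists_norm_coord_le
  obtain ⟨δ, hδ, hcδ⟩ := exists_pos_mul_lt hε c
  obtain ⟨g, hg, hfg, hgD⟩ := bs.exists_mem_span_N_sub_lt_and_coord_eq hp f D (lt_min hε hδ)
  have hsup : (⨆ j : ℕ, ‖bs.coord j (f - g)‖) ≤ c * δ := ciSup_le fun j =>
    (hcoord j (f - g)).trans
      (mul_le_mul_of_nonneg_left (hfg.le.trans (min_le_right _ _)) hc)
  exact ⟨g, hg, hfg.trans_le (min_le_left _ _), hsup.trans_lt hcδ, bs.proj_congr hgD⟩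

/-- (Lemma 3.5 ii).) Let `𝒳` be a basis of a `p`-Banach space and `f ∈ X` with
`supp(f) = ∅`. For every finite `D` and `ε > 0` there is `g` in the span with `‖f − g‖ < ε`,
`sup_j |x_j^*(g)| < ε` and `P_D(g) = P_D(f) = 0`. -/
theorem approximation_in_span_empty_supp {𝕜 : Type*} [RCLike 𝕜] {X : Type*}
    [AddCommGroup X] [Module 𝕜 X] {p : ℝ} (hp : 0 < p) (hp1 : p ≤ 1) (bs : PBasis 𝕜 X p)
    (f : X) (hf : ∀ n : ℕ, bs.coord n f = 0) :
    ∀ (D : Finset ℕ) (ε : ℝ), 0 < ε →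
      ∃ g ∈ Submodule.span 𝕜 (Set.range bs.e), bs.N (f - g) < ε ∧
        (⨆ j : ℕ, ‖bs.coord j g‖) < ε ∧ bs.proj D g = 0 ∧ bs.proj D f = 0 := by
  intro D ε hε
  obtain ⟨g, hg, hfg, hsup, hgD⟩ := approximation_in_span_empty_supp_general hp bs f D hε
  have hfD : bs.proj D f = 0 := by simp [PBasis.proj, hf]
  exact ⟨g, hg, hfg, by simpa [hf] using hsup, hgD.trans hfD, hfD⟩
end
end

section
/- Let 0 < p ≤ 1, let X be a p-Banach space over 𝔽 = ℝ or ℂ, and let 𝒳 be a basis of X. Then 𝒳 is almost greedy if and only if there is C > 0 such that ‖f − P_A(f)‖ ≤ C·‖f − (min_{n∈A}|x_n^*(f)|)·𝟙_{ε,B}‖ for all f ∈ X, all greedy sets A of f, all B ⊂ ℕ with |B| ≤ |A| and either A < B or B < A, and all signs ε on B. -/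
open scoped BigOperators

noncomputable section

/-!
Put `M = ‖·‖^p`. Raising the two estimates to the power `p` turns them into estimates for `M`,
which is subadditive and satisfies `M (t f) = |t|^p M f`, so that only the usual triangle inequality
is needed.

Each of the two conditions implies quasi-greediness (take `B = ∅`) together with a *domination
property*: `M (∑_S aₙ xₙ) ≤ D M (∑_T bₙ xₙ)` whenever `|S| ≤ |T|` and `|aₙ| ≤ α ≤ |bₘ|`. One
compares both sides with `α 𝟙_H` for a set `H` far to the right of `S` and `T`. The separated
condition reaches only coefficients `aₙ` of modulus exactly `α`; writing `2 a = α ε + a'` with a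
sign `ε` and `|a'| ≤ α` and taking suprema extends the bound to all coefficients of modulus at most
`α`.

Conversely, let `A` be greedy for `f`, `α = min_A |xₙ*(f)|` and `g = f - ∑_B cₙ xₙ`, where
`cₙ = xₙ*(f)` on `A ∩ B` and `|cₙ| ≤ α` on `B \ A`. The set `G` of the `n ∈ A ∪ B` with
`|xₙ*(g)| ≥ α` is greedy for `g`, and `f - P_A f` differs from `g - P_G g` by a combination over
`B \ A` with coefficients of modulus at most `α`, which is dominated by `P_G g`. The choice
`cₙ = xₙ*(f)` is almost greediness, and `cₙ = α εₙ` is the separated condition.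
-/

theorem rpow_le_rpow_mul_rpow_iff {x y C p : ℝ} (hx : 0 ≤ x) (hy : 0 ≤ y) (hC : 0 ≤ C)
    (hp : 0 < p) : x ^ p ≤ C ^ p * y ^ p ↔ x ≤ C * y := by
  rw [← Real.mul_rpow hC hy, Real.rpow_le_rpow_iff hx (mul_nonneg hC hy) hp]

theorem exists_pos_congr_rpow {P Q : ℝ → Prop} {p : ℝ} (hp : p ≠ 0)
    (h : ∀ C, 0 < C → (P (C ^ p) ↔ Q C)) : (∃ C, 0 < C ∧ P C) ↔ ∃ C, 0 < C ∧ Q C := by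
  constructor
  · rintro ⟨C, hC, hP⟩
    exact ⟨C ^ p⁻¹, by positivity, (h _ (by positivity)).1 <| by rwa [Real.rpow_inv_rpow hC.le hp]⟩
  · rintro ⟨C, hC, hQ⟩
    exact ⟨C ^ p, by positivity, (h C hC).2 hQ⟩

theorem exists_norm_eq_one_norm_two_mul_sub_mul_le {𝕜 : Type*} [RCLike 𝕜] {a : 𝕜} {α : ℝ}
    (ha : ‖a‖ ≤ α) : ∃ ε : 𝕜, ‖ε‖ = 1 ∧ ‖2 * a - α * ε‖ ≤ α := by
  have hα : 0 ≤ α := (norm_nonneg a).trans ha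
  rcases eq_or_ne a 0 with rfl | ha0
  · exact ⟨1, norm_one, by simp [abs_of_nonneg hα]⟩
  have hna : (‖a‖ : 𝕜) ≠ 0 := by simpa using ha0
  have hε : ‖a / (‖a‖ : 𝕜)‖ = 1 := by simp [ha0]
  have hsub : 2 * a - α * (a / (‖a‖ : 𝕜)) = ((2 * ‖a‖ - α : ℝ) : 𝕜) * (a / (‖a‖ : 𝕜)) := by
    push_cast
    field_simp
  refine ⟨a / (‖a‖ : 𝕜), hε, ?_⟩
  rw [hsub, norm_mul, hε, mul_one, RCLike.norm_ofReal, abs_le]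
  constructor <;> linarith [norm_nonneg a]

theorem exists_finset_card_eq_forall_lt {ι : Type*} [LinearOrder ι] [NoMaxOrder ι] [Nonempty ι]
    (S : Finset ι) (k : ℕ) : ∃ H : Finset ι, H.card = k ∧ ∀ s ∈ S, ∀ h ∈ H, s < h := by
  obtain ⟨u, hu⟩ := S.exists_le
  obtain ⟨H, hHu, hH⟩ := (Set.Ioi_infinite u).exists_subset_card_eq k
  exact ⟨H, hH, fun s hs h hh => (hu s hs).trans_lt (hHu hh)⟩

/-- `N` is a `p`-seminorm: a `p`-norm that may vanish at nonzero vectors. -/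
structure IsPSeminorm (𝕜 : Type*) [NormedField 𝕜] {X : Type*} [AddCommGroup X] [Module 𝕜 X]
    (p : ℝ) (N : X → ℝ) : Prop where
  nonneg : ∀ f, 0 ≤ N f
  map_smul : ∀ (t : 𝕜) (f : X), N (t • f) = ‖t‖ * N f
  rpow_map_add_le : ∀ f g, N (f + g) ^ p ≤ N f ^ p + N g ^ p

/-- `M` is a `p`-homogeneous seminorm. The `p`-th powers of `p`-seminorms are of this kind; they
satisfy the ordinary triangle inequality. -/
structure IsPHomogeneousSeminorm (𝕜 : Type*) [NormedField 𝕜] {X : Type*} [AddCommGroup X]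
    [Module 𝕜 X] (p : ℝ) (M : X → ℝ) : Prop where
  exponent_pos : 0 < p
  map_smul : ∀ (t : 𝕜) (f : X), M (t • f) = ‖t‖ ^ p * M f
  map_add_le : ∀ f g, M (f + g) ≤ M f + M g

theorem IsPSeminorm.rpow {𝕜 : Type*} [NormedField 𝕜] {X : Type*} [AddCommGroup X] [Module 𝕜 X]
    {p : ℝ} {N : X → ℝ} (hN : IsPSeminorm 𝕜 p N) (hp : 0 < p) :
    IsPHomogeneousSeminorm 𝕜 p fun f => N f ^ p where
  exponent_pos := hp
  map_smul t f := by rw [hN.map_smul, Real.mul_rpow (norm_nonneg t) (hN.nonneg f)]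
  map_add_le := hN.rpow_map_add_le

namespace IsPHomogeneousSeminorm

section NormedField

variable {𝕜 : Type*} [NormedField 𝕜] {X : Type*} [AddCommGroup X] [Module 𝕜 X] {p : ℝ}
  {M : X → ℝ}

theorem map_zero (hM : IsPHomogeneousSeminorm 𝕜 p M) : M 0 = 0 := by
  simpa [Real.zero_rpow hM.exponent_pos.ne'] using hM.map_smul 0 0

theorem map_neg (hM : IsPHomogeneousSeminorm 𝕜 p M) (f : X) : M (-f) = M f := by
  simpa using hM.map_smul (-1) f

theorem map_sub_le (hM : IsPHomogeneousSeminorm 𝕜 p M) (f g : X) : M (f - g) ≤ M f + M g := by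
  simpa only [sub_eq_add_neg, hM.map_neg] using hM.map_add_le f (-g)

theorem nonneg (hM : IsPHomogeneousSeminorm 𝕜 p M) (f : X) : 0 ≤ M f := by
  have h := hM.map_sub_le f f
  rw [sub_self, hM.map_zero] at h
  linarith

theorem map_smul_le_map_smul (hM : IsPHomogeneousSeminorm 𝕜 p M) {s t : 𝕜} (h : ‖s‖ ≤ ‖t‖)
    (f : X) : M (s • f) ≤ M (t • f) := by
  rw [hM.map_smul, hM.map_smul]
  exact mul_le_mul_of_nonneg_right
    (Real.rpow_le_rpow (norm_nonneg s) h hM.exponent_pos.le) (hM.nonneg f)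

theorem map_sum_smul_le (hM : IsPHomogeneousSeminorm 𝕜 p M) {ι : Type*} (S : Finset ι)
    (a : ι → 𝕜) (x : ι → X) :
    M (∑ n ∈ S, a n • x n) ≤ ∑ n ∈ S, ‖a n‖ ^ p * M (x n) := by
  simpa only [hM.map_smul] using
    Finset.le_sum_of_subadditive M hM.map_zero.le hM.map_add_le S fun n => a n • x n

end NormedField

section RCLike

variable {𝕜 : Type*} [RCLike 𝕜] {X : Type*} [AddCommGroup X] [Module 𝕜 X] {p : ℝ} {M : X → ℝ}

theorem map_sum_smul_le_of_forall_sign (hM : IsPHomogeneousSeminorm 𝕜 p M) {ι : Type*}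
    {S : Finset ι} {x : ι → X} {α D : ℝ}
    (hD : ∀ ε : ι → 𝕜, (∀ n ∈ S, ‖ε n‖ = 1) → M (∑ n ∈ S, (α * ε n) • x n) ≤ D)
    {a : ι → 𝕜} (ha : ∀ n ∈ S, ‖a n‖ ≤ α) :
    M (∑ n ∈ S, a n • x n) ≤ D / (2 ^ p - 1) := by
  have hp := hM.exponent_pos
  have htwo : (1 : ℝ) < 2 ^ p := Real.one_lt_rpow one_lt_two hp
  set V : Set ℝ := (fun a : ι → 𝕜 => M (∑ n ∈ S, a n • x n)) '' {a | ∀ n ∈ S, ‖a n‖ ≤ α}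
  have hV : BddAbove V := by
    refine ⟨∑ n ∈ S, α ^ p * M (x n), Set.forall_mem_image.2 fun a ha => ?_⟩
    refine (hM.map_sum_smul_le S a x).trans (Finset.sum_le_sum fun n hn => ?_)
    have := hM.nonneg (x n)
    gcongr
    exact ha n hn
  have hmem : ∀ {a : ι → 𝕜}, (∀ n ∈ S, ‖a n‖ ≤ α) → M (∑ n ∈ S, a n • x n) ≤ sSup V :=
    fun ha => le_csSup hV (Set.mem_image_of_mem _ ha)
  have hstep : ∀ v ∈ V, v ≤ (D + sSup V) / 2 ^ p := by
    refine Set.forall_mem_image.2 fun a ha => ?_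
    choose! ε hε using fun n hn => exists_norm_eq_one_norm_two_mul_sub_mul_le (ha n hn)
    have hsplit : (2 : 𝕜) • ∑ n ∈ S, a n • x n =
        ∑ n ∈ S, (α * ε n) • x n + ∑ n ∈ S, (2 * a n - α * ε n) • x n := by
      simp only [Finset.smul_sum, smul_smul, ← Finset.sum_add_distrib, ← add_smul, add_sub_cancel]
    rw [le_div_iff₀' (by positivity)]
    calc 2 ^ p * M (∑ n ∈ S, a n • x n)
        = M ((2 : 𝕜) • ∑ n ∈ S, a n • x n) := by rw [hM.map_smul, RCLike.norm_ofNat]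
      _ ≤ M (∑ n ∈ S, (α * ε n) • x n) + M (∑ n ∈ S, (2 * a n - α * ε n) • x n) :=
        hsplit ▸ hM.map_add_le _ _
      _ ≤ D + sSup V := add_le_add (hD ε fun n hn => (hε n hn).1) (hmem fun n hn => (hε n hn).2)
  have hsup : sSup V ≤ (D + sSup V) / 2 ^ p :=
    csSup_le ⟨_, Set.mem_image_of_mem _ ha⟩ hstep
  refine (hmem ha).trans ?_
  rw [le_div_iff₀ (by positivity)] at hsup
  rw [le_div_iff₀ (sub_pos.2 htwo)]
  linarith

end RCLike

end IsPHomogeneousSeminorm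

/-- A biorthogonal system: vectors `e n` and functionals `coord n`, not required to be bounded or
to span a dense subspace. No norm on `X` is fixed: the notions below take the functional measuring
the size of vectors as an argument, so that they apply to a `p`-norm and to its `p`-th power. -/
structure BiorthogonalSystem (𝕜 ι X : Type*) [NormedField 𝕜] [AddCommGroup X] [Module 𝕜 X] where
  /-- the vectors -/
  e : ι → X
  /-- the functionals -/
  coord : ι → X →ₗ[𝕜] 𝕜
  coord_e_self : ∀ n, coord n (e n) = 1
  coord_e_of_ne : ∀ {n m}, n ≠ m → coord n (e m) = 0

namespace BiorthogonalSystem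

section NormedField

variable {𝕜 ι X : Type*} [NormedField 𝕜] [AddCommGroup X] [Module 𝕜 X]
  (b : BiorthogonalSystem 𝕜 ι X) {p : ℝ}

/-- The combination `∑_{n ∈ S} aₙ xₙ`. -/
def comb (a : ι → 𝕜) (S : Finset ι) : X := ∑ n ∈ S, a n • b.e n

/-- The projection `P_A f = ∑_{n ∈ A} xₙ*(f) xₙ`. -/
def proj (A : Finset ι) (f : X) : X := b.comb (fun n => b.coord n f) A

/-- `A` is a greedy set of `f`. -/
def IsGreedySet (f : X) (A : Finset ι) : Prop :=
  ∀ n ∈ A, ∀ m, m ∉ A → ‖b.coord m f‖ ≤ ‖b.coord n f‖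

/-- `min_{n ∈ A} |xₙ*(f)|`, with value `0` if `A` is empty. -/
def minCoef (f : X) (A : Finset ι) : ℝ :=
  sInf ((fun n => ‖b.coord n f‖) '' (A : Set ι))

/-- `C`-quasi-greediness with respect to `M`. -/
def IsQuasiGreedyWith (M : X → ℝ) (C : ℝ) : Prop :=
  ∀ (f : X) (A : Finset ι), b.IsGreedySet f A → M (f - b.proj A f) ≤ C * M f

/-- `C`-almost-greediness with respect to `M`. -/
def IsAlmostGreedyWith (M : X → ℝ) (C : ℝ) : Prop :=
  ∀ (f : X) (A B : Finset ι), b.IsGreedySet f A → B.card ≤ A.card →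
    M (f - b.proj A f) ≤ C * M (f - b.proj B f)

/-- The domination property: combinations with coefficients of modulus at most `α` are controlled by
combinations of at least as many vectors with coefficients of modulus at least `α`. It strengthens
superdemocracy, and it is what quasi-greediness lacks to be almost greediness. -/
def IsDominatingWith (M : X → ℝ) (D : ℝ) : Prop :=
  ∀ (S T : Finset ι) (a c : ι → 𝕜) (α : ℝ), 0 ≤ α → S.card ≤ T.card → (∀ n ∈ S, ‖a n‖ ≤ α) →
    (∀ n ∈ T, α ≤ ‖c n‖) → M (b.comb a S) ≤ D * M (b.comb c T)

section Algebra

theorem coord_comb [DecidableEq ι] (a : ι → 𝕜) (S : Finset ι) (m : ι) :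
    b.coord m (b.comb a S) = if m ∈ S then a m else 0 := by
  have hterm : ∀ n, b.coord m (a n • b.e n) = if m = n then a n else 0 := fun n => by
    split_ifs with h
    · rw [h, map_smul, b.coord_e_self, smul_eq_mul, mul_one]
    · rw [map_smul, b.coord_e_of_ne h, smul_zero]
  simp only [comb, map_sum, hterm, Finset.sum_ite_eq]

theorem comb_empty (a : ι → 𝕜) : b.comb a ∅ = 0 := Finset.sum_empty

theorem comb_congr {a c : ι → 𝕜} {S : Finset ι} (h : ∀ n ∈ S, a n = c n) :
    b.comb a S = b.comb c S :=
  Finset.sum_congr rfl fun n hn => by rw [h n hn]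

theorem comb_add_comb (a c : ι → 𝕜) (S : Finset ι) :
    b.comb a S + b.comb c S = b.comb (fun n => a n + c n) S := by
  simp only [comb, add_smul, Finset.sum_add_distrib]

theorem smul_comb (t : 𝕜) (a : ι → 𝕜) (S : Finset ι) :
    t • b.comb a S = b.comb (fun n => t * a n) S := by
  simp only [comb, Finset.smul_sum, mul_smul]

theorem comb_eq_comb_of_subset [DecidableEq ι] {S U : Finset ι} (h : S ⊆ U) (a : ι → 𝕜) :
    b.comb a S = b.comb (fun n => if n ∈ S then a n else 0) U := by
  simp only [comb, ite_smul, zero_smul, Finset.sum_ite_mem, Finset.inter_eq_right.2 h]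

theorem coord_comb_add_comb_right {a c : ι → 𝕜} {S T : Finset ι} (h : Disjoint S T) {n : ι}
    (hn : n ∈ T) : b.coord n (b.comb a S + b.comb c T) = c n := by
  classical
  rw [map_add, b.coord_comb, b.coord_comb, if_neg (Finset.disjoint_right.1 h hn), if_pos hn,
    zero_add]

theorem comb_add_comb_sub_proj_right {a c : ι → 𝕜} {S T : Finset ι} (h : Disjoint S T) :
    b.comb a S + b.comb c T - b.proj T (b.comb a S + b.comb c T) = b.comb a S := by
  have hproj : b.proj T (b.comb a S + b.comb c T) = b.comb c T :=
    b.comb_congr fun n hn => by rw [b.coord_comb_add_comb_right h hn]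
  rw [hproj, add_sub_cancel_right]

theorem comb_add_comb_sub_proj_left {a c : ι → 𝕜} {S T : Finset ι} (h : Disjoint S T) :
    b.comb a S + b.comb c T - b.proj S (b.comb a S + b.comb c T) = b.comb c T := by
  rw [add_comm, b.comb_add_comb_sub_proj_right h.symm]

theorem sub_proj_eq_add_comb [DecidableEq ι] {f : X} {A B G : Finset ι} {c : ι → 𝕜}
    (hc : ∀ n ∈ B, n ∈ A → c n = b.coord n f) (hAG : A \ B ⊆ G) (hG : G ⊆ A ∪ B) :
    f - b.proj A f = f - b.comb c B - b.proj G (f - b.comb c B) +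
      b.comb (fun n => if n ∈ G then b.coord n f else c n) (B \ A) := by
  have hcomb : b.proj A f + b.comb (fun n => if n ∈ G then b.coord n f else c n) (B \ A) =
      b.comb c B + b.proj G (f - b.comb c B) := by
    rw [proj, proj, b.comb_eq_comb_of_subset (Finset.subset_union_left (s₂ := B)),
      b.comb_eq_comb_of_subset (Finset.sdiff_subset.trans (Finset.subset_union_right (s₁ := A))),
      b.comb_eq_comb_of_subset (Finset.subset_union_right (s₁ := A)) c,
      b.comb_eq_comb_of_subset hG, b.comb_add_comb, b.comb_add_comb]
    refine b.comb_congr fun n _ => ?_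
    rw [map_sub, b.coord_comb]
    grind
  rw [sub_sub, ← hcomb, sub_add_eq_sub_sub, sub_add_cancel]

end Algebra

section Greedy

variable {b} {M : X → ℝ} {C D : ℝ} {f : X} {A : Finset ι}

theorem isGreedySet_of_threshold {α : ℝ} (hA : ∀ n ∈ A, α ≤ ‖b.coord n f‖)
    (hAc : ∀ n, n ∉ A → ‖b.coord n f‖ ≤ α) : b.IsGreedySet f A :=
  fun n hn m hm => (hAc m hm).trans (hA n hn)

theorem isGreedySet_comb_add_comb {a c : ι → 𝕜} {S T : Finset ι} {α : ℝ} (h : Disjoint S T)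
    (hα : 0 ≤ α) (ha : ∀ n ∈ S, ‖a n‖ ≤ α) (hc : ∀ n ∈ T, α ≤ ‖c n‖) :
    b.IsGreedySet (b.comb a S + b.comb c T) T := by
  classical
  refine isGreedySet_of_threshold (α := α) (fun n hn => ?_) fun n hn => ?_
  · rw [b.coord_comb_add_comb_right h hn]
    exact hc n hn
  · rw [map_add, b.coord_comb, b.coord_comb, if_neg hn, add_zero]
    split_ifs with hS
    · exact ha n hS
    · rwa [norm_zero]

theorem minCoef_nonneg : 0 ≤ b.minCoef f A :=
  Real.sInf_nonneg <| by rintro _ ⟨n, -, rfl⟩; exact norm_nonneg _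

theorem minCoef_le {n : ι} (hn : n ∈ A) : b.minCoef f A ≤ ‖b.coord n f‖ :=
  csInf_le (A.finite_toSet.image _).bddBelow ⟨n, hn, rfl⟩

theorem minCoef_eq_of_forall_le {n : ι} (hn : n ∈ A)
    (hmin : ∀ m ∈ A, ‖b.coord n f‖ ≤ ‖b.coord m f‖) : b.minCoef f A = ‖b.coord n f‖ :=
  IsLeast.csInf_eq ⟨⟨n, hn, rfl⟩, Set.forall_mem_image.2 hmin⟩

theorem IsGreedySet.norm_coord_le_minCoef (h : b.IsGreedySet f A) (hA : A.Nonempty) {n : ι}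
    (hn : n ∉ A) : ‖b.coord n f‖ ≤ b.minCoef f A :=
  le_csInf (hA.to_set.image _) <| Set.forall_mem_image.2 fun m hm => h m hm n hn

theorem IsGreedySet.filter_union_sub_comb [DecidableEq ι] (h : b.IsGreedySet f A) {B : Finset ι}
    (hcard : B.card ≤ A.card) (c : ι → 𝕜) :
    b.IsGreedySet (f - b.comb c B)
      ((A ∪ B).filter fun n => b.minCoef f A ≤ ‖b.coord n (f - b.comb c B)‖) := by
  rcases A.eq_empty_or_nonempty with rfl | hA
  · have hB : B = ∅ := Finset.card_eq_zero.1 (by simpa using hcard)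
    simp [hB, IsGreedySet]
  refine isGreedySet_of_threshold (fun n hn => (Finset.mem_filter.1 hn).2) fun n hn => ?_
  by_cases hAB : n ∈ A ∪ B
  · exact (not_le.1 fun hle => hn (Finset.mem_filter.2 ⟨hAB, hle⟩)).le
  · rw [Finset.mem_union, not_or] at hAB
    rw [map_sub, b.coord_comb, if_neg hAB.2, sub_zero]
    exact h.norm_coord_le_minCoef hA hAB.1

theorem IsAlmostGreedyWith.isQuasiGreedyWith (h : b.IsAlmostGreedyWith M C) :
    b.IsQuasiGreedyWith M C := fun f A hA => by
  simpa only [proj, comb_empty, sub_zero] using h f A ∅ hA (by simp)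

theorem IsAlmostGreedyWith.map_comb_le (h : b.IsAlmostGreedyWith M C) {S T : Finset ι}
    {a c : ι → 𝕜} {α : ℝ} (hST : Disjoint S T) (hcard : S.card ≤ T.card) (hα : 0 ≤ α)
    (ha : ∀ n ∈ S, ‖a n‖ ≤ α) (hc : ∀ n ∈ T, α ≤ ‖c n‖) :
    M (b.comb a S) ≤ C * M (b.comb c T) := by
  simpa only [b.comb_add_comb_sub_proj_left hST, b.comb_add_comb_sub_proj_right hST] using
    h _ T S (isGreedySet_comb_add_comb hST hα ha hc) hcard

theorem IsQuasiGreedyWith.map_proj_le (hM : IsPHomogeneousSeminorm 𝕜 p M)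
    (h : b.IsQuasiGreedyWith M C) (hA : b.IsGreedySet f A) :
    M (b.proj A f) ≤ (1 + C) * M f :=
  calc M (b.proj A f) = M (f - (f - b.proj A f)) := by rw [sub_sub_cancel]
    _ ≤ M f + M (f - b.proj A f) := hM.map_sub_le _ _
    _ ≤ M f + C * M f := by gcongr; exact h f A hA
    _ = (1 + C) * M f := by ring

theorem IsQuasiGreedyWith.map_sub_proj_le_of_comb (hM : IsPHomogeneousSeminorm 𝕜 p M)
    (hC : b.IsQuasiGreedyWith M C) (hD : 0 ≤ D) (hdom : b.IsDominatingWith M D)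
    (hA : b.IsGreedySet f A) {B : Finset ι} (hcard : B.card ≤ A.card) {c : ι → 𝕜}
    (hc : ∀ n ∈ B, n ∈ A → c n = b.coord n f)
    (hc' : ∀ n ∈ B, n ∉ A → ‖c n‖ ≤ b.minCoef f A) :
    M (f - b.proj A f) ≤ (C + D * (1 + C)) * M (f - b.comb c B) := by
  classical
  set g := f - b.comb c B with hg
  set G := (A ∪ B).filter fun n => b.minCoef f A ≤ ‖b.coord n g‖
  set d : ι → 𝕜 := fun n => if n ∈ G then b.coord n f else c n
  have hG : b.IsGreedySet g G := hA.filter_union_sub_comb hcard c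
  have hAG : A \ B ⊆ G := fun n hn => by
    obtain ⟨hnA, hnB⟩ := Finset.mem_sdiff.1 hn
    refine Finset.mem_filter.2 ⟨Finset.mem_union_left B hnA, ?_⟩
    rw [hg, map_sub, b.coord_comb, if_neg hnB, sub_zero]
    exact minCoef_le hnA
  have hd : ∀ n ∈ B \ A, ‖d n‖ ≤ b.minCoef f A := fun n hn => by
    obtain ⟨hnB, hnA⟩ := Finset.mem_sdiff.1 hn
    have hAne : A.Nonempty := Finset.card_pos.1 ((Finset.card_pos.2 ⟨n, hnB⟩).trans_le hcard)
    simp only [d]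
    split_ifs
    · exact hA.norm_coord_le_minCoef hAne hnA
    · exact hc' n hnB hnA
  have hcardG : (B \ A).card ≤ G.card :=
    (Finset.card_sdiff_le_card_sdiff_iff.2 hcard).trans (Finset.card_le_card hAG)
  have hdomG : M (b.comb d (B \ A)) ≤ D * M (b.proj G g) :=
    hdom _ _ _ _ _ minCoef_nonneg hcardG hd fun n hn => (Finset.mem_filter.1 hn).2
  calc M (f - b.proj A f) = M (g - b.proj G g + b.comb d (B \ A)) :=
        congrArg M (b.sub_proj_eq_add_comb hc hAG (Finset.filter_subset _ _))
    _ ≤ M (g - b.proj G g) + M (b.comb d (B \ A)) := hM.map_add_le _ _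
    _ ≤ C * M g + D * ((1 + C) * M g) :=
        add_le_add (hC g G hG) (hdomG.trans (by gcongr; exact hC.map_proj_le hM hG))
    _ = (C + D * (1 + C)) * M g := by ring

theorem IsQuasiGreedyWith.isAlmostGreedyWith (hM : IsPHomogeneousSeminorm 𝕜 p M)
    (hC : b.IsQuasiGreedyWith M C) (hD : 0 ≤ D) (hdom : b.IsDominatingWith M D) :
    b.IsAlmostGreedyWith M (C + D * (1 + C)) := fun _ _ _ hA hcard =>
  hC.map_sub_proj_le_of_comb hM hD hdom hA hcard (fun _ _ _ => rfl) fun n hnB hnA =>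
    hA.norm_coord_le_minCoef (Finset.card_pos.1 ((Finset.card_pos.2 ⟨n, hnB⟩).trans_le hcard)) hnA

theorem isAlmostGreedyWith_rpow_iff {N : X → ℝ} (hN : ∀ f, 0 ≤ N f) (hp : 0 < p) (hC : 0 ≤ C) :
    b.IsAlmostGreedyWith (fun f => N f ^ p) (C ^ p) ↔ b.IsAlmostGreedyWith N C := by
  simp only [IsAlmostGreedyWith, rpow_le_rpow_mul_rpow_iff (hN _) (hN _) hC hp]

end Greedy

end NormedField

section RCLike

variable {𝕜 ι X : Type*} [RCLike 𝕜] [AddCommGroup X] [Module 𝕜 X]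

/-- Every element of `A` is smaller than every element of `B`, or vice versa. -/
def Separated [LT ι] (A B : Finset ι) : Prop :=
  (∀ m ∈ A, ∀ n ∈ B, m < n) ∨ ∀ n ∈ B, ∀ m ∈ A, n < m

theorem Separated.disjoint [Preorder ι] {A B : Finset ι} (h : Separated A B) : Disjoint A B :=
  Finset.disjoint_left.2 fun n hA hB =>
    h.elim (fun h => (h n hA n hB).false) fun h => (h n hB n hA).false

/-- The estimate `M (f - P_A f) ≤ C M (f - α 𝟙_{ε,B})`, where `α = min_{n ∈ A} |xₙ*(f)|`, for greedy
sets `A` of `f`, signs `ε`, and sets `B` separated from `A` with `|B| ≤ |A|`. -/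
def IsSeparatedSignedWith [LT ι] (b : BiorthogonalSystem 𝕜 ι X) (M : X → ℝ) (C : ℝ) : Prop :=
  ∀ (f : X) (A B : Finset ι) (ε : ι → 𝕜), b.IsGreedySet f A → B.card ≤ A.card → Separated A B →
    (∀ n ∈ B, ‖ε n‖ = 1) →
    M (f - b.proj A f) ≤ C * M (f - ((b.minCoef f A : ℝ) : 𝕜) • b.comb ε B)

variable {b : BiorthogonalSystem 𝕜 ι X} {M : X → ℝ} {p C D : ℝ}

theorem IsAlmostGreedyWith.isDominatingWith [Infinite ι] (hC : 0 ≤ C)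
    (h : b.IsAlmostGreedyWith M C) : b.IsDominatingWith M (C * C) := by
  classical
  intro S T a c α hα hcard ha hc
  obtain ⟨H, hSTH, hH⟩ := (S ∪ T).finite_toSet.infinite_compl.exists_subset_card_eq T.card
  have hdisj : Disjoint (S ∪ T) H := Finset.disjoint_right.2 fun n hn => by simpa using hSTH hn
  rw [Finset.disjoint_union_left] at hdisj
  have hnorm : ‖(α : 𝕜)‖ = α := by rw [RCLike.norm_ofReal, abs_of_nonneg hα]
  calc M (b.comb a S) ≤ C * M (b.comb (fun _ => (α : 𝕜)) H) :=
        h.map_comb_le hdisj.1 (hcard.trans hH.ge) hα ha fun _ _ => hnorm.ge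
    _ ≤ C * (C * M (b.comb c T)) := by
        gcongr
        exact h.map_comb_le hdisj.2.symm hH.le hα (fun _ _ => hnorm.le) hc
    _ = C * C * M (b.comb c T) := (mul_assoc C C _).symm

theorem IsQuasiGreedyWith.isSeparatedSignedWith [Preorder ι] (hM : IsPHomogeneousSeminorm 𝕜 p M)
    (hC : b.IsQuasiGreedyWith M C) (hD : 0 ≤ D) (hdom : b.IsDominatingWith M D) :
    b.IsSeparatedSignedWith M (C + D * (1 + C)) := by
  intro f A B ε hA hcard hAB hε
  rw [b.smul_comb]
  refine hC.map_sub_proj_le_of_comb hM hD hdom hA hcard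
    (fun n hnB hnA => (Finset.disjoint_left.1 hAB.disjoint hnA hnB).elim) fun n hnB _ => ?_
  rw [norm_mul, hε n hnB, mul_one, RCLike.norm_ofReal, abs_of_nonneg minCoef_nonneg]

theorem IsSeparatedSignedWith.isQuasiGreedyWith [LT ι] (h : b.IsSeparatedSignedWith M C) :
    b.IsQuasiGreedyWith M C := fun f A hA => by
  simpa only [comb_empty, smul_zero, sub_zero] using
    h f A ∅ 1 hA (by simp) (Or.inr (by simp)) (by simp)

theorem IsSeparatedSignedWith.map_smul_comb_le_of_isMin [Preorder ι]
    (h : b.IsSeparatedSignedWith M C) {S T : Finset ι} {ε c : ι → 𝕜} (hTS : Separated T S)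
    (hcard : S.card ≤ T.card) (hε : ∀ n ∈ S, ‖ε n‖ = 1) {t : ι} (ht : t ∈ T)
    (hmin : ∀ n ∈ T, ‖c t‖ ≤ ‖c n‖) :
    M ((‖c t‖ : 𝕜) • b.comb ε S) ≤ C * M (b.comb c T) := by
  have hST := hTS.disjoint.symm
  set f := (‖c t‖ : 𝕜) • b.comb ε S + b.comb c T with hf
  rw [b.smul_comb] at hf
  have hcoord : ∀ n ∈ T, b.coord n f = c n := fun n hn => by
    rw [hf, b.coord_comb_add_comb_right hST hn]
  have hgreedy : b.IsGreedySet f T := hf ▸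
    isGreedySet_comb_add_comb hST (norm_nonneg (c t)) (fun n hn => by simp [hε n hn]) hmin
  have hminCoef : b.minCoef f T = ‖c t‖ := by
    rw [minCoef_eq_of_forall_le ht fun n hn => by simpa only [hcoord, ht, hn] using hmin n hn,
      hcoord t ht]
  calc M ((‖c t‖ : 𝕜) • b.comb ε S) = M (f - b.proj T f) := by
        rw [hf, b.comb_add_comb_sub_proj_right hST, b.smul_comb]
    _ ≤ C * M (f - (b.minCoef f T : 𝕜) • b.comb ε S) := h f T S ε hgreedy hcard hTS hε
    _ = C * M (b.comb c T) := by rw [hminCoef, hf, ← b.smul_comb, add_sub_cancel_left]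

theorem IsSeparatedSignedWith.map_smul_comb_le [Preorder ι] (hM : IsPHomogeneousSeminorm 𝕜 p M)
    (h : b.IsSeparatedSignedWith M C) {S T : Finset ι} {ε c : ι → 𝕜} {α : ℝ}
    (hTS : Separated T S) (hcard : S.card ≤ T.card) (hα : 0 ≤ α) (hε : ∀ n ∈ S, ‖ε n‖ = 1)
    (hc : ∀ n ∈ T, α ≤ ‖c n‖) :
    M ((α : 𝕜) • b.comb ε S) ≤ C * M (b.comb c T) := by
  rcases T.eq_empty_or_nonempty with rfl | hT
  · have hS : S = ∅ := Finset.card_eq_zero.1 (by simpa using hcard)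
    simp only [hS, comb_empty, smul_zero, hM.map_zero, mul_zero, le_refl]
  obtain ⟨t, ht, hmin⟩ := T.exists_min_image (fun n => ‖c n‖) hT
  have hαt : ‖(α : 𝕜)‖ ≤ ‖(‖c t‖ : 𝕜)‖ := by
    rw [RCLike.norm_ofReal, abs_of_nonneg hα, RCLike.norm_ofReal, abs_norm]
    exact hc t ht
  exact (hM.map_smul_le_map_smul hαt _).trans
    (h.map_smul_comb_le_of_isMin hTS hcard hε ht hmin)

theorem IsSeparatedSignedWith.isDominatingWith [LinearOrder ι] [NoMaxOrder ι] [Nonempty ι]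
    (hM : IsPHomogeneousSeminorm 𝕜 p M) (hC : 0 ≤ C) (h : b.IsSeparatedSignedWith M C) :
    b.IsDominatingWith M (C * C / (2 ^ p - 1)) := by
  intro S T a c α hα hcard ha hc
  obtain ⟨H, hH, hlt⟩ := exists_finset_card_eq_forall_lt (S ∪ T) S.card
  have hHS : Separated H S := Or.inr fun n hn => hlt n (Finset.mem_union_left T hn)
  have hTH : Separated T H := Or.inl fun n hn => hlt n (Finset.mem_union_right S hn)
  have hsign : ∀ ε : ι → 𝕜, (∀ n ∈ S, ‖ε n‖ = 1) →
      M ((α : 𝕜) • b.comb ε S) ≤ C * C * M (b.comb c T) := fun ε hε =>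
    calc M ((α : 𝕜) • b.comb ε S) ≤ C * M (b.comb (fun _ => (α : 𝕜) * 1) H) :=
          h.map_smul_comb_le hM hHS hH.ge hα hε fun _ _ => by simp [abs_of_nonneg hα]
      _ = C * M ((α : 𝕜) • b.comb (fun _ => 1) H) := by rw [b.smul_comb]
      _ ≤ C * (C * M (b.comb c T)) := by
          gcongr
          exact h.map_smul_comb_le hM hTH (hH.trans_le hcard) hα (fun _ _ => norm_one) hc
      _ = C * C * M (b.comb c T) := (mul_assoc C C _).symm
  simp only [b.smul_comb] at hsign
  exact (hM.map_sum_smul_le_of_forall_sign hsign ha).trans_eq (mul_div_right_comm _ _ _)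

theorem isSeparatedSignedWith_rpow_iff [LT ι] {N : X → ℝ} (hN : ∀ f, 0 ≤ N f) (hp : 0 < p)
    (hC : 0 ≤ C) :
    b.IsSeparatedSignedWith (fun f => N f ^ p) (C ^ p) ↔ b.IsSeparatedSignedWith N C := by
  simp only [IsSeparatedSignedWith, rpow_le_rpow_mul_rpow_iff (hN _) (hN _) hC hp]

theorem exists_isAlmostGreedyWith_iff_exists_isSeparatedSignedWith [LinearOrder ι] [NoMaxOrder ι]
    [Nonempty ι] (hM : IsPHomogeneousSeminorm 𝕜 p M) :
    (∃ C, 0 < C ∧ b.IsAlmostGreedyWith M C) ↔ ∃ C, 0 < C ∧ b.IsSeparatedSignedWith M C := by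
  constructor
  · rintro ⟨C, hC, h⟩
    have := NoMaxOrder.infinite (α := ι)
    exact ⟨_, by positivity,
      h.isQuasiGreedyWith.isSeparatedSignedWith hM (by positivity) (h.isDominatingWith hC.le)⟩
  · rintro ⟨C, hC, h⟩
    have hden : (0 : ℝ) < 2 ^ p - 1 := sub_pos.2 (Real.one_lt_rpow one_lt_two hM.exponent_pos)
    exact ⟨_, by positivity,
      h.isQuasiGreedyWith.isAlmostGreedyWith hM (by positivity) (h.isDominatingWith hM hC.le)⟩

end RCLike

end BiorthogonalSystem

theorem almost_greedy_iff_separated_signed_polynomials_general {𝕜 ι X : Type*} [RCLike 𝕜]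
    [LinearOrder ι] [NoMaxOrder ι] [Nonempty ι] [AddCommGroup X] [Module 𝕜 X] {p : ℝ} (hp : 0 < p)
    {N : X → ℝ} (hN : IsPSeminorm 𝕜 p N) (b : BiorthogonalSystem 𝕜 ι X) :
    (∃ C, 0 < C ∧ b.IsAlmostGreedyWith N C) ↔ ∃ C, 0 < C ∧ b.IsSeparatedSignedWith N C := by
  have halmost := exists_pos_congr_rpow hp.ne' fun C hC =>
    BiorthogonalSystem.isAlmostGreedyWith_rpow_iff (b := b) hN.nonneg hp hC.le
  have hsigned := exists_pos_congr_rpow hp.ne' fun C hC =>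
    BiorthogonalSystem.isSeparatedSignedWith_rpow_iff (b := b) hN.nonneg hp hC.le
  rw [← halmost, ← hsigned]
  exact BiorthogonalSystem.exists_isAlmostGreedyWith_iff_exists_isSeparatedSignedWith (hN.rpow hp)

namespace PBasis

variable {𝕜 : Type*} [RCLike 𝕜] {X : Type*} [AddCommGroup X] [Module 𝕜 X] {p : ℝ}

theorem isPSeminorm (bs : PBasis 𝕜 X p) : IsPSeminorm 𝕜 p bs.N :=
  ⟨bs.N_nonneg, bs.N_smul, bs.N_padd⟩

/-- The biorthogonal system underlying a basis of a `p`-Banach space. -/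
def toBiorthogonalSystem (bs : PBasis 𝕜 X p) : BiorthogonalSystem 𝕜 ℕ X where
  e := bs.e
  coord := bs.coord
  coord_e_self n := by rw [bs.biorth, if_pos rfl]
  coord_e_of_ne h := by rw [bs.biorth, if_neg h]

end PBasis

/-- (Theorem 1.7, i) ⟺ iv).) A basis of a `p`-Banach space is almost greedy
iff there is `C > 0` with `‖f − P_A(f)‖ ≤ C‖f − (min_{n∈A}|x_n^*(f)|)·𝟙_{ε,B}‖` for all
`f`, greedy sets `A`, sets `B` with `|B| ≤ |A|` and `A < B` or `B < A`, and signs `ε`. -/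
theorem almost_greedy_iff_separated_signed_polynomials {𝕜 : Type*} [RCLike 𝕜] {X : Type*}
    [AddCommGroup X] [Module 𝕜 X] {p : ℝ} (hp : 0 < p) (hp1 : p ≤ 1) (bs : PBasis 𝕜 X p) :
    (∃ C : ℝ, 0 < C ∧ bs.IsAlmostGreedyWith C) ↔
      (∃ C : ℝ, 0 < C ∧ ∀ (f : X) (A B : Finset ℕ) (ε : ℕ → 𝕜),
        bs.IsGreedySet f A → B.card ≤ A.card →
        (PBasis.FinsetBefore A B ∨ PBasis.FinsetBefore B A) → PBasis.IsSign ε B →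
        bs.N (f - bs.proj A f) ≤
          C * bs.N (f - ((bs.minCoef f A : ℝ) : 𝕜) • bs.indSign ε B)) :=
  almost_greedy_iff_separated_signed_polynomials_general hp bs.isPSeminorm bs.toBiorthogonalSystem
end
end
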